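/- Let S = Greedy-EOM(1/2, c), where c is the vector of true costs, and for each winner i ∈ S let p_i = sup{ β > 0 : i ∈ Greedy-EOM(1/2, (β, c_{−i})) } be its threshold payment. Then Σ_{i∈S} p_i ≤ B; that is, the mechanism Greedy-EOM(1/2) with threshold payments is budget feasible. -/

import Mathlib

open Classical

/-- Marginal value `m_i(S) = v(S ∪ {i}) - v(S)`. -/
noncomputable def marg {ι : Type*} [DecidableEq ι] (v : Finset ι → ℝ) (S : Finset ι) (i : ι) : ℝ :=
  v (insert i S) - v S

/-- The next agent in the greedy order once the set `S` has been selected: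
an agent of `Sᶜ` maximizing marginal value over bid, ties broken by the fixed linear order. -/
noncomputable def pick {ι : Type*} [Fintype ι] [LinearOrder ι] [Nonempty ι]
    (v : Finset ι → ℝ) (b : ι → ℝ) (S : Finset ι) : ι :=
  if h : Sᶜ.Nonempty then
    (Sᶜ.filter fun j => ∀ j' ∈ Sᶜ, marg v S j' / b j' ≤ marg v S j / b j).min'
      (by
        obtain ⟨j, hj, hmax⟩ := Finset.exists_max_image Sᶜ (fun j => marg v S j / b j) h
        exact ⟨j, Finset.mem_filter.mpr ⟨hj, hmax⟩⟩)
  else Classical.arbitrary ι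

/-- `greedySet v b t` is the set `S_t` of the first `t` agents in the greedy order
computed with respect to the bid vector `b`. -/
noncomputable def greedySet {ι : Type*} [Fintype ι] [LinearOrder ι] [Nonempty ι]
    (v : Finset ι → ℝ) (b : ι → ℝ) : ℕ → Finset ι
  | 0 => ∅
  | t + 1 => insert (pick v b (greedySet v b t)) (greedySet v b t)

/-- `agent v b k` is the `k`-th agent `a_k` in the greedy order (1-indexed). -/
noncomputable def agent {ι : Type*} [Fintype ι] [LinearOrder ι] [Nonempty ι]
    (v : Finset ι → ℝ) (b : ι → ℝ) (k : ℕ) : ι :=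
  pick v b (greedySet v b (k - 1))

/-- `optVal v b B A'` is the maximum of `v S` over `S ⊆ A'` with `∑_{i ∈ S} b i ≤ B`. -/
noncomputable def optVal {ι : Type*} (v : Finset ι → ℝ) (b : ι → ℝ) (B : ℝ)
    (A' : Finset ι) : ℝ :=
  sSup (v '' {S : Finset ι | S ⊆ A' ∧ ∑ i ∈ S, b i ≤ B})

/-- The greedy threshold mechanism `Greedy-TM(γ, b)`: it outputs `S_{k-1}` where `k` is the
least index with `b_{a_k} · v(S_k) > γ · B · m_{a_k}(S_{k-1})`, and all of `A` if no such `k`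
exists. -/
noncomputable def greedyTM {ι : Type*} [Fintype ι] [LinearOrder ι] [Nonempty ι]
    (v : Finset ι → ℝ) (B γ : ℝ) (b : ι → ℝ) : Finset ι :=
  if h : ∃ k, (1 ≤ k ∧ k ≤ Fintype.card ι) ∧
      b (agent v b k) * v (greedySet v b k) >
        γ * B * marg v (greedySet v b (k - 1)) (agent v b k)
  then greedySet v b (Nat.find h - 1)
  else Finset.univ

/-- The exponential-time greedy oracle mechanism `Greedy-EOM(α, b)`: it outputs `S_{k-1}` where
`k` is the least index with `v(S_k) > α · opt_b(A, B)`, and all of `A` if no such `k` exists. -/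
noncomputable def greedyEOM {ι : Type*} [Fintype ι] [LinearOrder ι] [Nonempty ι]
    (v : Finset ι → ℝ) (B α : ℝ) (b : ι → ℝ) : Finset ι :=
  if h : ∃ k, (1 ≤ k ∧ k ≤ Fintype.card ι) ∧
      v (greedySet v b k) > α * optVal v b B Finset.univ
  then greedySet v b (Nat.find h - 1)
  else Finset.univ

/-- The greedy oracle mechanism `Greedy-OM(α, b)` with oracle `O`: it outputs
`{ a_t : 1 ≤ t ≤ n, v(S_t) ≤ α · O(b, A \ {a_t}) }`. -/
noncomputable def greedyOM {ι : Type*} [Fintype ι] [LinearOrder ι] [Nonempty ι]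
    (v : Finset ι → ℝ) (O : (ι → ℝ) → Finset ι → ℝ) (α : ℝ) (b : ι → ℝ) : Finset ι :=
  ((Finset.Icc 1 (Fintype.card ι)).filter
      (fun t => v (greedySet v b t) ≤ α * O b (Finset.univ.erase (agent v b t)))).image
    (fun t => agent v b t)

/-- An allocation rule `f`, mapping bid vectors with positive entries to subsets of the agents,
is monotone if a winner remains a winner after lowering his bid. -/
def MonotoneAlloc {ι : Type*} [DecidableEq ι] (f : (ι → ℝ) → Finset ι) : Prop :=
  ∀ b : ι → ℝ, (∀ j, 0 < b j) → ∀ i ∈ f b, ∀ β : ℝ, 0 < β → β ≤ b i →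
    i ∈ f (Function.update b i β)

/-!
Suppose a winner `i`, selected at stage `t + 1` under `c`, raises his bid to `β` and still wins.
The greedy order is unchanged until `i` is selected, so he is now selected after a set `T ⊇ S_t`,
and by submodularity his marginal `μ` at `T` is at most the one at `S_t`. At that moment `i` has
the best ratio `μ / β`, so a `c`-optimal set adds at most `B * (μ / β)` to `v (T ∪ {i})`, whereas
the stopping rule gives `v (T ∪ {i}) ≤ α * opt`. Hence `(1 - α) * opt * β ≤ B * μ`: the payment of
`i` is at most `B / ((1 - α) * opt)` times his marginal at `S_t`. These marginals telescope to
`v S ≤ α * opt`, so the payments sum to at most `α / (1 - α) * B`.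
-/

/-- Submodularity of a set function in its lattice form, which controls the greedy order through
diminishing marginal values. -/
def IsSubmodular {ι : Type*} [DecidableEq ι] (v : Finset ι → ℝ) : Prop :=
  ∀ S T : Finset ι, v (S ∪ T) + v (S ∩ T) ≤ v S + v T

lemma nonneg_of_monotone {ι : Type*} {v : Finset ι → ℝ} (hmono : Monotone v) (hv0 : v ∅ = 0)
    (S : Finset ι) : 0 ≤ v S :=
  hv0.ge.trans (hmono (Finset.empty_subset S))

section Valuation

variable {ι : Type*} [DecidableEq ι] {v : Finset ι → ℝ} {S T : Finset ι} {i : ι}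

lemma marg_of_mem (hi : i ∈ S) : marg v S i = 0 := by
  rw [marg, Finset.insert_eq_of_mem hi, sub_self]

lemma marg_nonneg (hmono : Monotone v) (S : Finset ι) (i : ι) : 0 ≤ marg v S i :=
  sub_nonneg.mpr (hmono (Finset.subset_insert i S))

lemma IsSubmodular.marg_le_marg (hsub : IsSubmodular v) (hST : S ⊆ T) (hi : i ∉ T) :
    marg v T i ≤ marg v S i := by
  have h := hsub (insert i S) T
  rw [Finset.insert_union, Finset.union_eq_right.mpr hST, Finset.insert_inter_of_notMem hi,
    Finset.inter_eq_left.mpr hST] at h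
  unfold marg
  linarith

lemma IsSubmodular.union_le_add_sum_marg (hsub : IsSubmodular v) (T O : Finset ι) :
    v (O ∪ T) ≤ v T + ∑ j ∈ O, marg v T j := by
  induction O using Finset.induction_on with
  | empty => simp
  | insert a s ha ih =>
    have hstep : marg v (s ∪ T) a ≤ marg v T a := by
      by_cases haT : a ∈ T
      · rw [marg_of_mem haT, marg_of_mem (Finset.mem_union_right s haT)]
      · exact hsub.marg_le_marg Finset.subset_union_right (by simp [ha, haT])
    have hsplit : v (insert a s ∪ T) = v (s ∪ T) + marg v (s ∪ T) a := by
      rw [Finset.insert_union, marg, add_sub_cancel]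
    rw [Finset.sum_insert ha]
    linarith

lemma IsSubmodular.le_add_mul_sum_of_marg_le (hsub : IsSubmodular v) (hmono : Monotone v)
    {c : ι → ℝ} (hc : ∀ j, 0 ≤ c j) {ρ : ℝ} (hρ : 0 ≤ ρ)
    (hmarg : ∀ j ∉ T, marg v T j ≤ ρ * c j) (O : Finset ι) :
    v O ≤ v T + ρ * ∑ j ∈ O, c j := by
  have hmarg' (j : ι) : marg v T j ≤ ρ * c j := by
    by_cases hj : j ∈ T
    · exact (marg_of_mem hj).trans_le (mul_nonneg hρ (hc j))
    · exact hmarg j hj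
  calc v O ≤ v (O ∪ T) := hmono Finset.subset_union_left
    _ ≤ v T + ∑ j ∈ O, marg v T j := hsub.union_le_add_sum_marg T O
    _ ≤ v T + ρ * ∑ j ∈ O, c j := by
      rw [Finset.mul_sum]
      gcongr with j
      exact hmarg' j

end Valuation

section Optimum

variable {ι : Type*} {v : Finset ι → ℝ} {b c : ι → ℝ} {B : ℝ} {A' S : Finset ι}

lemma finite_feasible_values (v : Finset ι → ℝ) (b : ι → ℝ) (B : ℝ) (A' : Finset ι) :
    (v '' {S : Finset ι | S ⊆ A' ∧ ∑ i ∈ S, b i ≤ B}).Finite :=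
  (A'.powerset.finite_toSet.subset fun _ hS ↦ Finset.mem_powerset.mpr hS.1).image v

lemma le_optVal (hS : S ⊆ A') (hb : ∑ i ∈ S, b i ≤ B) : v S ≤ optVal v b B A' :=
  le_csSup (finite_feasible_values v b B A').bddAbove ⟨S, ⟨hS, hb⟩, rfl⟩

lemma exists_eq_optVal (v : Finset ι → ℝ) (b : ι → ℝ) (hB : 0 ≤ B) (A' : Finset ι) :
    ∃ S ⊆ A', ∑ i ∈ S, b i ≤ B ∧ v S = optVal v b B A' := by
  have hne : (v '' {S : Finset ι | S ⊆ A' ∧ ∑ i ∈ S, b i ≤ B}).Nonempty :=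
    ⟨v ∅, ∅, ⟨Finset.empty_subset A', by simpa using hB⟩, rfl⟩
  obtain ⟨S, ⟨hSA, hSB⟩, hS⟩ := hne.csSup_mem (finite_feasible_values v b B A')
  exact ⟨S, hSA, hSB, hS⟩

lemma optVal_anti (v : Finset ι → ℝ) (hB : 0 ≤ B) (hcb : c ≤ b) (A' : Finset ι) :
    optVal v b B A' ≤ optVal v c B A' := by
  obtain ⟨S, hSA, hSB, hS⟩ := exists_eq_optVal v b hB A'
  exact hS ▸ le_optVal hSA ((Finset.sum_le_sum fun j _ ↦ hcb j).trans hSB)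

lemma optVal_nonneg (hv0 : v ∅ = 0) (hB : 0 ≤ B) (b : ι → ℝ) (A' : Finset ι) :
    0 ≤ optVal v b B A' :=
  hv0 ▸ le_optVal (Finset.empty_subset A') (by simpa using hB)

end Optimum

section GreedyOrder

variable {ι : Type*} [Fintype ι] [LinearOrder ι] [Nonempty ι]
  {v : Finset ι → ℝ} {b c : ι → ℝ} {S : Finset ι} {i : ι} {s t m : ℕ}

/-- The agents outside `S` whose ratio of marginal value at `S` to bid is largest, that is, the
candidates among which `pick` breaks ties. -/
def ratioMaximizers (v : Finset ι → ℝ) (b : ι → ℝ) (S : Finset ι) : Set ι :=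
  {j | j ∉ S ∧ ∀ j' ∉ S, marg v S j' / b j' ≤ marg v S j / b j}

lemma isLeast_pick (v : Finset ι → ℝ) (b : ι → ℝ) (hS : S ≠ Finset.univ) :
    IsLeast (ratioMaximizers v b S) (pick v b S) := by
  have hne : Sᶜ.Nonempty := by rwa [Finset.nonempty_iff_ne_empty, Ne, Finset.compl_eq_empty_iff]
  rw [pick, dif_pos hne]
  convert Finset.isLeast_min' _ _
  ext j
  simp [ratioMaximizers]

lemma pick_notMem (v : Finset ι → ℝ) (b : ι → ℝ) (hS : S ≠ Finset.univ) : pick v b S ∉ S :=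
  (isLeast_pick v b hS).1.1

lemma marg_le_ratio_pick_mul {j : ι} (hb : 0 < b j) (hj : j ∉ S) :
    marg v S j ≤ marg v S (pick v b S) / b (pick v b S) * b j := by
  have hS : S ≠ Finset.univ := fun h ↦ hj (h ▸ Finset.mem_univ j)
  exact (div_le_iff₀ hb).mp ((isLeast_pick v b hS).1.2 j hj)

lemma pick_eq_pick_of_le (hmono : Monotone v) (hc : ∀ j, 0 < c j) (hcb : c ≤ b)
    (hpick : b (pick v c S) = c (pick v c S)) : pick v b S = pick v c S := by
  by_cases hS : S = Finset.univ
  · simp [pick, hS]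
  have hratio (j : ι) : marg v S j / b j ≤ marg v S j / c j :=
    div_le_div_of_nonneg_left (marg_nonneg hmono S j) (hc j) (hcb j)
  have hleast := isLeast_pick v c hS
  have hmem : pick v c S ∈ ratioMaximizers v b S :=
    ⟨hleast.1.1, fun j hj ↦ hpick ▸ (hratio j).trans (hleast.1.2 j hj)⟩
  have hsubset : ratioMaximizers v b S ⊆ ratioMaximizers v c S := by
    refine fun j hj ↦ ⟨hj.1, fun j' hj' ↦ ?_⟩
    calc marg v S j' / c j' ≤ marg v S (pick v c S) / c (pick v c S) := hleast.1.2 j' hj'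
      _ = marg v S (pick v c S) / b (pick v c S) := by rw [hpick]
      _ ≤ marg v S j / b j := hj.2 _ hleast.1.1
      _ ≤ marg v S j / c j := hratio j
  exact (isLeast_pick v b hS).unique ⟨hmem, fun j hj ↦ hleast.2 (hsubset hj)⟩

lemma greedySet_succ (v : Finset ι → ℝ) (b : ι → ℝ) (t : ℕ) :
    greedySet v b (t + 1) = insert (agent v b (t + 1)) (greedySet v b t) :=
  rfl

lemma greedySet_mono (v : Finset ι → ℝ) (b : ι → ℝ) : Monotone (greedySet v b) :=
  monotone_nat_of_le_succ fun _ ↦ Finset.subset_insert _ _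

lemma agent_mem_greedySet (v : Finset ι → ℝ) (b : ι → ℝ) (ht : t < m) :
    agent v b (t + 1) ∈ greedySet v b m :=
  greedySet_mono v b (Nat.succ_le_of_lt ht) (Finset.mem_insert_self _ _)

lemma exists_agent_eq_of_mem_greedySet (hi : i ∈ greedySet v b m) :
    ∃ t < m, agent v b (t + 1) = i := by
  induction m with
  | zero => simp [greedySet] at hi
  | succ m ih =>
    rcases Finset.mem_insert.mp hi with rfl | hi
    · exact ⟨m, m.lt_succ_self, rfl⟩
    · obtain ⟨t, htm, hti⟩ := ih hi
      exact ⟨t, htm.trans m.lt_succ_self, hti⟩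

lemma greedySet_ne_univ (v : Finset ι → ℝ) (b : ι → ℝ) (ht : t < Fintype.card ι) :
    greedySet v b t ≠ Finset.univ := by
  have hcard (n : ℕ) : (greedySet v b n).card ≤ n := by
    induction n with
    | zero => simp [greedySet]
    | succ n ih => exact (Finset.card_insert_le _ _).trans (Nat.succ_le_succ ih)
  intro h
  have := hcard t
  rw [h, Finset.card_univ] at this
  exact this.not_gt ht

lemma agent_notMem_greedySet (v : Finset ι → ℝ) (b : ι → ℝ) (ht : t < Fintype.card ι) :
    agent v b (t + 1) ∉ greedySet v b t :=
  pick_notMem v b (greedySet_ne_univ v b ht)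

lemma sum_greedySet {M : Type*} [AddCommMonoid M] (v : Finset ι → ℝ) (b : ι → ℝ) (p : ι → M)
    (hm : m ≤ Fintype.card ι) :
    ∑ i ∈ greedySet v b m, p i = ∑ t ∈ Finset.range m, p (agent v b (t + 1)) := by
  induction m with
  | zero => simp [greedySet]
  | succ m ih =>
    rw [greedySet_succ, Finset.sum_insert (agent_notMem_greedySet v b hm), ih (by lia),
      Finset.sum_range_succ, add_comm]

lemma greedySet_card (v : Finset ι → ℝ) (b : ι → ℝ) :
    greedySet v b (Fintype.card ι) = Finset.univ := by
  refine Finset.eq_univ_of_card _ ?_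
  rw [Finset.card_eq_sum_ones, sum_greedySet v b _ le_rfl]
  simp

lemma sum_marg_agent (v : Finset ι → ℝ) (b : ι → ℝ) (m : ℕ) :
    ∑ t ∈ Finset.range m, marg v (greedySet v b t) (agent v b (t + 1)) =
      v (greedySet v b m) - v ∅ :=
  Finset.sum_range_sub (fun t ↦ v (greedySet v b t)) m

lemma greedySet_eq_greedySet_of_le (hmono : Monotone v) (hc : ∀ j, 0 < c j) (hcb : c ≤ b)
    (heq : ∀ j ∈ greedySet v c t, b j = c j) : greedySet v b t = greedySet v c t := by
  induction t with
  | zero => rfl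
  | succ t ih =>
    have hpick := pick_eq_pick_of_le hmono hc hcb (heq _ (Finset.mem_insert_self _ _))
    rw [greedySet, ih fun j hj ↦ heq j (Finset.mem_insert_of_mem hj), hpick, greedySet]

lemma greedySet_subset_greedySet_of_le (hmono : Monotone v) (hc : ∀ j, 0 < c j) (hcb : c ≤ b)
    (heq : ∀ j ≠ i, b j = c j) (hi : i ∉ greedySet v c t) (hs : agent v b (s + 1) = i) :
    greedySet v c t ⊆ greedySet v b s := by
  have hprefix : greedySet v b t = greedySet v c t :=
    greedySet_eq_greedySet_of_le hmono hc hcb fun j hj ↦ heq j (ne_of_mem_of_not_mem hj hi)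
  have hts : t ≤ s := by
    by_contra! hst
    exact hi (hprefix ▸ hs ▸ agent_mem_greedySet v b hst)
  exact hprefix ▸ greedySet_mono v b hts

lemma IsSubmodular.le_greedySet_add_ratio_mul_sum (hsub : IsSubmodular v) (hmono : Monotone v)
    (hb : ∀ j, 0 < b j) (hc : ∀ j, 0 ≤ c j) (hbc : ∀ j ≠ agent v b (t + 1), b j ≤ c j)
    (O : Finset ι) :
    v O ≤ v (greedySet v b (t + 1)) +
      marg v (greedySet v b t) (agent v b (t + 1)) / b (agent v b (t + 1)) * ∑ j ∈ O, c j := by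
  have hratio : 0 ≤ marg v (greedySet v b t) (agent v b (t + 1)) / b (agent v b (t + 1)) :=
    div_nonneg (marg_nonneg hmono _ _) (hb _).le
  refine hsub.le_add_mul_sum_of_marg_le hmono hc hratio (fun j hj ↦ ?_) O
  obtain ⟨hne, hjt⟩ := not_or.mp (mt Finset.mem_insert.mpr hj)
  calc marg v (greedySet v b (t + 1)) j ≤ marg v (greedySet v b t) j :=
        hsub.marg_le_marg (greedySet_mono v b t.le_succ) hj
    _ ≤ _ * b j := marg_le_ratio_pick_mul (hb j) hjt
    _ ≤ _ * c j := mul_le_mul_of_nonneg_left (hbc j hne) hratio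

end GreedyOrder

/-- The threshold payment of agent `i` under the allocation rule `f` at the bid vector `c`.
As a real supremum it is `0` when `i` wins with arbitrarily high bids. -/
noncomputable def thresholdPayment {ι : Type*} [DecidableEq ι] (f : (ι → ℝ) → Finset ι)
    (c : ι → ℝ) (i : ι) : ℝ :=
  sSup {β : ℝ | 0 < β ∧ i ∈ f (Function.update c i β)}

section GreedyEOM

variable {ι : Type*} [Fintype ι] [LinearOrder ι] [Nonempty ι]
  {v : Finset ι → ℝ} {b c : ι → ℝ} {B α : ℝ} {i : ι} {t : ℕ}

lemma exists_greedyEOM_eq_greedySet (h0 : v ∅ ≤ α * optVal v b B Finset.univ) :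
    ∃ m ≤ Fintype.card ι, greedyEOM v B α b = greedySet v b m ∧
      v (greedySet v b m) ≤ α * optVal v b B Finset.univ := by
  unfold greedyEOM
  split_ifs with h
  · obtain ⟨hpos, hle⟩ := (Nat.find_spec h).1
    refine ⟨Nat.find h - 1, by lia, rfl, ?_⟩
    rcases Nat.eq_zero_or_pos (Nat.find h - 1) with hzero | hone
    · rwa [hzero]
    · by_contra! hgt
      exact Nat.find_min h (by lia) ⟨⟨hone, by lia⟩, hgt⟩
  · push Not at h
    exact ⟨Fintype.card ι, le_rfl, (greedySet_card v b).symm,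
      h _ ⟨Fintype.card_pos, le_rfl⟩⟩

lemma exists_stage_of_mem_greedyEOM (hmono : Monotone v)
    (h0 : v ∅ ≤ α * optVal v b B Finset.univ) (hi : i ∈ greedyEOM v B α b) :
    ∃ s, s < Fintype.card ι ∧ agent v b (s + 1) = i ∧
      v (greedySet v b (s + 1)) ≤ α * optVal v b B Finset.univ := by
  obtain ⟨m, hm, hEOM, hval⟩ := exists_greedyEOM_eq_greedySet h0
  obtain ⟨s, hsm, hs⟩ := exists_agent_eq_of_mem_greedySet (hEOM ▸ hi)
  exact ⟨s, hsm.trans_le hm, hs, (hmono (greedySet_mono v b hsm)).trans hval⟩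

lemma IsSubmodular.one_sub_mul_optVal_mul_bid_le (hsub : IsSubmodular v) (hmono : Monotone v)
    (hv0 : v ∅ = 0) (hB : 0 ≤ B) (hα : 0 ≤ α) (hc : ∀ j, 0 < c j) (hcb : c ≤ b)
    (heq : ∀ j ≠ i, b j = c j) (hit : i ∉ greedySet v c t) (hi : i ∈ greedyEOM v B α b) :
    (1 - α) * optVal v c B Finset.univ * b i ≤ B * marg v (greedySet v c t) i := by
  have hb (j : ι) : 0 < b j := (hc j).trans_le (hcb j)
  have h0 : v ∅ ≤ α * optVal v b B Finset.univ :=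
    hv0.trans_le (mul_nonneg hα (optVal_nonneg hv0 hB b _))
  obtain ⟨s, hs, rfl, hval⟩ := exists_stage_of_mem_greedyEOM hmono h0 hi
  set μ := marg v (greedySet v b s) (agent v b (s + 1))
  set βi := b (agent v b (s + 1))
  have hμ : μ ≤ marg v (greedySet v c t) (agent v b (s + 1)) :=
    hsub.marg_le_marg (greedySet_subset_greedySet_of_le hmono hc hcb heq hit rfl)
      (agent_notMem_greedySet v b hs)
  have hβi : 0 < βi := hb _
  have hratio : 0 ≤ μ / βi := div_nonneg (marg_nonneg hmono _ _) hβi.le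
  obtain ⟨O, -, hOB, hO⟩ := exists_eq_optVal v c hB Finset.univ
  have hopt : optVal v c B Finset.univ ≤ α * optVal v c B Finset.univ + μ / βi * B :=
    calc optVal v c B Finset.univ = v O := hO.symm
      _ ≤ v (greedySet v b (s + 1)) + μ / βi * ∑ j ∈ O, c j :=
        hsub.le_greedySet_add_ratio_mul_sum hmono hb (fun j ↦ (hc j).le) (fun j hj ↦ (heq j hj).le)
          O
      _ ≤ α * optVal v b B Finset.univ + μ / βi * B := by gcongr
      _ ≤ α * optVal v c B Finset.univ + μ / βi * B := by
        gcongr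
        exact optVal_anti v hB hcb _
  calc (1 - α) * optVal v c B Finset.univ * βi ≤ μ / βi * B * βi :=
        mul_le_mul_of_nonneg_right (by linarith) hβi.le
    _ = B * μ := by field_simp
    _ ≤ B * marg v (greedySet v c t) (agent v b (s + 1)) := mul_le_mul_of_nonneg_left hμ hB

lemma IsSubmodular.thresholdPayment_agent_le (hsub : IsSubmodular v) (hmono : Monotone v)
    (hv0 : v ∅ = 0) (hB : 0 ≤ B) (hα : 0 ≤ α) (hα1 : α < 1) (hc : ∀ j, 0 < c j)
    (hopt : 0 < optVal v c B Finset.univ) (ht : t < Fintype.card ι)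
    (hwin : agent v c (t + 1) ∈ greedyEOM v B α c) :
    thresholdPayment (greedyEOM v B α) c (agent v c (t + 1)) ≤
      B / ((1 - α) * optVal v c B Finset.univ) *
        marg v (greedySet v c t) (agent v c (t + 1)) := by
  set i := agent v c (t + 1)
  have hpos : 0 < (1 - α) * optVal v c B Finset.univ := mul_pos (sub_pos.mpr hα1) hopt
  have hit : i ∉ greedySet v c t := agent_notMem_greedySet v c ht
  refine Real.sSup_le ?_ (mul_nonneg (div_nonneg hB hpos.le) (marg_nonneg hmono _ _))
  rintro β ⟨-, hβ⟩
  rw [div_mul_eq_mul_div, le_div_iff₀ hpos, mul_comm]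
  rcases le_total (c i) β with hle | hle
  · simpa using hsub.one_sub_mul_optVal_mul_bid_le hmono hv0 hB hα hc (le_update_self_iff.mpr hle)
      (fun j hj ↦ Function.update_of_ne hj β c) hit hβ
  · exact (mul_le_mul_of_nonneg_left hle hpos.le).trans
      (hsub.one_sub_mul_optVal_mul_bid_le hmono hv0 hB hα hc le_rfl (fun _ _ ↦ rfl) hit hwin)

lemma IsSubmodular.sum_thresholdPayment_le_of_optVal_pos (hsub : IsSubmodular v)
    (hmono : Monotone v) (hv0 : v ∅ = 0) (hB : 0 ≤ B) (hα : 0 ≤ α) (hα1 : α < 1)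
    (hc : ∀ j, 0 < c j) (hopt : 0 < optVal v c B Finset.univ) :
    ∑ i ∈ greedyEOM v B α c, thresholdPayment (greedyEOM v B α) c i ≤ α / (1 - α) * B := by
  have hα1' : 0 < 1 - α := sub_pos.mpr hα1
  obtain ⟨m, hm, hEOM, hval⟩ := exists_greedyEOM_eq_greedySet (b := c) (B := B) (α := α)
    (hv0.trans_le (mul_nonneg hα hopt.le))
  set K := B / ((1 - α) * optVal v c B Finset.univ) with hK
  have hpay (t : ℕ) (ht : t ∈ Finset.range m) :
      thresholdPayment (greedyEOM v B α) c (agent v c (t + 1)) ≤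
        K * marg v (greedySet v c t) (agent v c (t + 1)) := by
    have htm := Finset.mem_range.mp ht
    exact hsub.thresholdPayment_agent_le hmono hv0 hB hα hα1 hc hopt (htm.trans_le hm)
      (hEOM ▸ agent_mem_greedySet v c htm)
  calc ∑ i ∈ greedyEOM v B α c, thresholdPayment (greedyEOM v B α) c i
      = ∑ t ∈ Finset.range m, thresholdPayment (greedyEOM v B α) c (agent v c (t + 1)) := by
        rw [hEOM, sum_greedySet v c _ hm]
    _ ≤ K * ∑ t ∈ Finset.range m, marg v (greedySet v c t) (agent v c (t + 1)) := by
        rw [Finset.mul_sum]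
        exact Finset.sum_le_sum hpay
    _ = K * v (greedySet v c m) := by rw [sum_marg_agent, hv0, sub_zero]
    _ ≤ K * (α * optVal v c B Finset.univ) := by gcongr
    _ = α / (1 - α) * B := by rw [hK]; field_simp

lemma IsSubmodular.eq_zero_of_optVal_eq_zero (hsub : IsSubmodular v) (hmono : Monotone v)
    (hv0 : v ∅ = 0) (hc : ∀ j, 0 < c j) (hopt : optVal v c B Finset.univ = 0)
    (hwin : (greedyEOM v B α c).Nonempty) : v = 0 := by
  obtain ⟨i, hi⟩ := hwin
  obtain ⟨s, -, -, hval⟩ := exists_stage_of_mem_greedyEOM hmono (by rw [hv0, hopt, mul_zero]) hi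
  rw [hopt, mul_zero] at hval
  have hfirst : v (greedySet v c 1) = 0 := by
    refine le_antisymm ?_ (nonneg_of_monotone hmono hv0 _)
    exact (hmono (greedySet_mono v c (Nat.succ_le_succ s.zero_le))).trans hval
  have hmarg : marg v (greedySet v c 0) (agent v c 1) = 0 := by
    rw [marg, ← greedySet_succ, hfirst, greedySet, hv0, sub_zero]
  funext S
  refine le_antisymm ?_ (nonneg_of_monotone hmono hv0 S)
  simpa [hfirst, hmarg] using hsub.le_greedySet_add_ratio_mul_sum (t := 0) hmono hc
    (fun j ↦ (hc j).le) (fun _ _ ↦ le_rfl) S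

lemma greedyEOM_zero (hB : 0 ≤ B) (hα : 0 ≤ α) (b : ι → ℝ) :
    greedyEOM (0 : Finset ι → ℝ) B α b = Finset.univ := by
  rw [greedyEOM, dif_neg]
  rintro ⟨k, -, hk⟩
  exact hk.not_ge (mul_nonneg hα (optVal_nonneg rfl hB b _))

-- A junk value: with the zero valuation every bid wins, so the winning bids are unbounded.
lemma thresholdPayment_greedyEOM_zero (hB : 0 ≤ B) (hα : 0 ≤ α) (c : ι → ℝ) (i : ι) :
    thresholdPayment (greedyEOM (0 : Finset ι → ℝ) B α) c i = 0 := by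
  simp only [thresholdPayment, greedyEOM_zero hB hα, Finset.mem_univ, and_true]
  exact Real.sSup_of_not_bddAbove (not_bddAbove_Ioi 0)

end GreedyEOM

theorem greedyEOM_budget_feasible_general {ι : Type*} [Fintype ι] [LinearOrder ι] [Nonempty ι]
    {v : Finset ι → ℝ} (hv0 : v ∅ = 0) (hmono : Monotone v) (hsub : IsSubmodular v)
    {B : ℝ} (hB : 0 ≤ B) {α : ℝ} (hα : 0 ≤ α) (hα1 : α < 1) {c : ι → ℝ} (hc : ∀ i, 0 < c i) :
    ∑ i ∈ greedyEOM v B α c, thresholdPayment (greedyEOM v B α) c i ≤ α / (1 - α) * B := by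
  rcases (optVal_nonneg hv0 hB c Finset.univ).eq_or_lt' with hopt | hopt
  · have hbound : 0 ≤ α / (1 - α) * B := mul_nonneg (div_nonneg hα (sub_pos.mpr hα1).le) hB
    rcases (greedyEOM v B α c).eq_empty_or_nonempty with hempty | hwin
    · rwa [hempty, Finset.sum_empty]
    · obtain rfl := hsub.eq_zero_of_optVal_eq_zero hmono hv0 hc hopt hwin
      rwa [Finset.sum_eq_zero fun i _ ↦ thresholdPayment_greedyEOM_zero hB hα c i]
  · exact hsub.sum_thresholdPayment_le_of_optVal_pos hmono hv0 hB hα hα1 hc hopt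

/-- `Greedy-EOM(1/2)` with threshold payments is budget feasible
(Lemma 4.3). -/
theorem greedyEOM_budget_feasible {ι : Type*} [Fintype ι] [LinearOrder ι] [Nonempty ι]
    (v : Finset ι → ℝ) (hv0 : v (∅ : Finset ι) = 0)
    (hvmono : ∀ S T : Finset ι, S ⊆ T → v S ≤ v T)
    (hvsub : ∀ S T : Finset ι, v (S ∪ T) + v (S ∩ T) ≤ v S + v T)
    (B : ℝ) (hB : 0 < B)
    (c : ι → ℝ) (hc : ∀ i, 0 < c i) (hcB : ∀ i, c i ≤ B) :
    ∑ i ∈ greedyEOM v B (1 / 2) c,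
      sSup {β : ℝ | 0 < β ∧ i ∈ greedyEOM v B (1 / 2) (Function.update c i β)} ≤ B := by
  have h := greedyEOM_budget_feasible_general hv0 (fun S T ↦ hvmono S T) hvsub hB.le (α := 1 / 2)
    (by norm_num) (by norm_num) hc
  exact h.trans_eq (by norm_num)
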